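/- For every fixed r ∈ (0, π/2), as t → 0⁺ one has the small-time asymptotics p_t(r, 0) ~ (r / sin r) · (1 - r·cot r)^{-1/2} · (√π / (4 t^{3/2})) · e^{-r²/(4t)}; that is, lim_{t→0⁺} p_t(r, 0) · (4 t^{3/2} / √π) · e^{r²/(4t)} = (r / sin r) · (1 - r·cot r)^{-1/2}. -/

import Mathlib

open Real

/-- The Jacobi polynomial `P_k^{0,m}` defined by the Rodrigues-type formula. -/
noncomputable def jacobiP (k m : ℕ) (x : ℝ) : ℝ :=
  ((-1 : ℝ) ^ k / (2 ^ k * (Nat.factorial k : ℝ) * (1 + x) ^ m)) *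
    iteratedDeriv k (fun y : ℝ => (1 + y) ^ m * (1 - y ^ 2) ^ k) x

/-- The general term of the double series defining the subelliptic heat kernel on `SU(2)`. -/
noncomputable def heatTerm (t r z : ℝ) (n : ℤ) (k : ℕ) : ℂ :=
  (((2 * (k : ℝ) + (n.natAbs : ℝ) + 1) *
      Real.exp (-(4 * (k : ℝ) * ((k : ℝ) + (n.natAbs : ℝ) + 1) + 2 * (n.natAbs : ℝ)) * t) *
      (Real.cos r) ^ n.natAbs * jacobiP k n.natAbs (Real.cos (2 * r)) : ℝ) : ℂ) *
    Complex.exp ((n : ℂ) * (z : ℂ) * Complex.I)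

/-- The subelliptic heat kernel `p_t(r,z)` on `SU(2)` in cylindric coordinates
(the double series is real-valued). -/
noncomputable def heatP (t r z : ℝ) : ℝ := (∑' n : ℤ, ∑' k : ℕ, heatTerm t r z n k).re


noncomputable def aa (A : ℝ) (s i : ℕ) : ℝ := (i.choose s : ℝ) * A ^ (i - s)

lemma aa_zero (A : ℝ) (i : ℕ) : aa A 0 i = A ^ i := by simp [aa]

lemma aa_gt (A : ℝ) {s i : ℕ} (h : i < s) : aa A s i = 0 := by
  simp [aa, Nat.choose_eq_zero_of_lt h]

lemma aa_succ (A : ℝ) (s i : ℕ) :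
    aa A (s + 1) (i + 1) = A * aa A (s + 1) i + aa A s i := by
  unfold aa
  rw [Nat.choose_succ_succ]
  rcases lt_or_ge i (s + 1) with h | h
  · rw [Nat.choose_eq_zero_of_lt h]
    have : i + 1 - (s + 1) = i - s := by omega
    rw [this]; push_cast; ring
  · have h1 : i + 1 - (s + 1) = i - (s + 1) + 1 := by omega
    have h2 : i - s = i - (s + 1) + 1 := by omega
    rw [h1, h2]; push_cast; ring

noncomputable def ff (A D w : ℝ) (i j : ℕ) : ℝ :=
  ∑ s ∈ Finset.range (i + 1), w ^ s * aa A s i * aa D s j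

lemma ff_eq (A D w : ℝ) (i j N : ℕ) (h : i < N) :
    ff A D w i j = ∑ s ∈ Finset.range N, w ^ s * aa A s i * aa D s j := by
  unfold ff
  apply Finset.sum_subset
  · intro x; simp; omega
  · intro x _ hx
    simp at hx
    rw [aa_gt A (by omega)]; ring

lemma ff_zero_left (A D w : ℝ) (j : ℕ) : ff A D w 0 j = D ^ j := by
  simp [ff, aa_zero]

lemma ff_zero_right (A D w : ℝ) (i : ℕ) : ff A D w i 0 = A ^ i := by
  unfold ff
  rw [Finset.sum_range_succ', Finset.sum_eq_zero]
  · simp [aa_zero]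
  · intro s _
    rw [aa_gt D (by omega)]; ring

lemma ff_symm (A D w : ℝ) (i j : ℕ) : ff A D w i j = ff D A w j i := by
  rw [ff_eq A D w i j (i + j + 1) (by omega), ff_eq D A w j i (i + j + 1) (by omega)]
  apply Finset.sum_congr rfl
  intros; ring

lemma ff_rec (A D w : ℝ) (i j : ℕ) : ff A D w (i + 1) (j + 1) =
    A * ff A D w i (j + 1) + D * ff A D w (i + 1) j - (A * D - w) * ff A D w i j := by
  have h : ff A D w (i + 1) (j + 1) - A * ff A D w i (j + 1) - D * ff A D w (i + 1) j
      + A * D * ff A D w i j = w * ff A D w i j := by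
    have h0 : w * ff A D w i j = ∑ s ∈ Finset.range (i + 1), w * (w ^ s * aa A s i * aa D s j) := by
      rw [ff, Finset.mul_sum]
    rw [h0, ff_eq A D w (i + 1) (j + 1) (i + 1 + 1) (by omega),
      ff_eq A D w i (j + 1) (i + 1 + 1) (by omega),
      ff_eq A D w (i + 1) j (i + 1 + 1) (by omega), ff_eq A D w i j (i + 1 + 1) (by omega),
      Finset.mul_sum, Finset.mul_sum, Finset.mul_sum, ← Finset.sum_sub_distrib,
      ← Finset.sum_sub_distrib, ← Finset.sum_add_distrib, Finset.sum_range_succ']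
    simp only [aa_zero, aa_succ]
    have : ∀ a b c : ℝ, c = 0 → a = b → a + c = b := by intros; linarith
    apply this
    · ring
    · apply Finset.sum_congr rfl
      intro s _
      ring
  linarith

noncomputable def TT (A D w : ℝ) (m : ℕ) : ℝ :=
  ∑ p ∈ Finset.HasAntidiagonal.antidiagonal m, ff A D w p.1 p.2

lemma TT_rec (A D w : ℝ) (m : ℕ) :
    TT A D w (m + 2) = (A + D) * TT A D w (m + 1) - (A * D - w) * TT A D w m := by
  have h1 : TT A D w (m + 2) = D ^ (m + 2) + (∑ p ∈ Finset.HasAntidiagonal.antidiagonal m, ff A D w (p.1 + 1) (p.2 + 1)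
      + A ^ (m + 2)) := by
    unfold TT
    rw [Finset.Nat.sum_antidiagonal_succ, Finset.Nat.sum_antidiagonal_succ']
    simp only [ff_zero_left, ff_zero_right]
    ring
  have h2 : TT A D w (m + 1) = D ^ (m + 1) + ∑ p ∈ Finset.HasAntidiagonal.antidiagonal m, ff A D w (p.1 + 1) p.2 := by
    unfold TT
    rw [Finset.Nat.sum_antidiagonal_succ]
    simp only [ff_zero_left]
  have h3 : TT A D w (m + 1) = A ^ (m + 1) + ∑ p ∈ Finset.HasAntidiagonal.antidiagonal m, ff A D w p.1 (p.2 + 1) := by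
    unfold TT
    rw [Finset.Nat.sum_antidiagonal_succ']
    simp only [ff_zero_right]
    try ring
  have h4 : ∑ p ∈ Finset.HasAntidiagonal.antidiagonal m, ff A D w (p.1 + 1) (p.2 + 1) =
      A * ∑ p ∈ Finset.HasAntidiagonal.antidiagonal m, ff A D w p.1 (p.2 + 1) +
      D * ∑ p ∈ Finset.HasAntidiagonal.antidiagonal m, ff A D w (p.1 + 1) p.2 - (A * D - w) * TT A D w m := by
    unfold TT
    rw [Finset.mul_sum, Finset.mul_sum, Finset.mul_sum, ← Finset.sum_add_distrib,
      ← Finset.sum_sub_distrib]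
    exact Finset.sum_congr rfl fun p _ => ff_rec A D w p.1 p.2
  rw [h1, h4]
  have e2 := congrArg (fun x => D * x) h2
  have e3 := congrArg (fun x => A * x) h3
  rw [add_mul]
  have : A ^ (m + 2) = A * A ^ (m + 1) := by ring
  have : D ^ (m + 2) = D * D ^ (m + 1) := by ring
  linarith

lemma TT_sin (A D w : ℝ) (δ : ℂ) (h1 : ((A + D : ℝ) : ℂ) = 2 * Complex.cos δ) (h2 : A * D - w = 1) (m : ℕ) :
    (TT A D w m : ℂ) * Complex.sin δ = Complex.sin ((m + 1) * δ) := by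
  induction m using Nat.strong_induction_on with
  | _ m ih =>
    match m with
    | 0 => simp [TT, ff_zero_left]
    | 1 =>
      have : TT A D w 1 = A + D := by
        simp [TT, Finset.Nat.antidiagonal_succ, ff_zero_left, ff_zero_right, add_comm]
      rw [this, h1]
      norm_num
      rw [Complex.sin_two_mul]; ring
    | m + 2 =>
      rw [TT_rec, h2]
      have e1 := ih (m + 1) (by omega)
      have e0 := ih m (by omega)
      rw [one_mul, Complex.ofReal_sub, Complex.ofReal_mul, h1, sub_mul, mul_assoc, e1, e0]
      push_cast
      have a1 : ((m : ℂ) + 2 + 1) * δ = (m + 1 + 1) * δ + δ := by ring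
      have a2 : ((m : ℂ) + 1) * δ = (m + 1 + 1) * δ - δ := by ring
      rw [a1, a2, Complex.sin_add, Complex.sin_sub]; ring

lemma ff_scale (c w y : ℝ) (i j : ℕ) :
    ff (c * rexp y) (c * rexp (-y)) w i j = rexp (((i : ℝ) - j) * y) * ff c c w i j := by
  unfold ff
  rw [Finset.mul_sum]
  apply Finset.sum_congr rfl
  intro s hs
  simp only [Finset.mem_range] at hs
  rcases lt_or_ge j s with h | h
  · rw [aa_gt _ h, aa_gt _ h]; ring
  · have hi : s ≤ i := by omega
    unfold aa
    rw [mul_pow, mul_pow, ← Real.exp_nat_mul, ← Real.exp_nat_mul]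
    have : rexp (((i : ℝ) - j) * y) = rexp (((i - s : ℕ) : ℝ) * y) * rexp (((j - s : ℕ) : ℝ) * -y) := by
      rw [← Real.exp_add]; congr 1
      rw [Nat.cast_sub hi, Nat.cast_sub h]; ring
    rw [this]; ring

lemma ff_bound {c : ℝ} (h0 : 0 < c) (h1 : c < 1) (k n : ℕ) :
    |ff c c (-(1 - c ^ 2)) k (k + n)| ≤ 3 ^ k := by
  have hε : 0 < 1 - c := by linarith
  have key : ∀ s N : ℕ, aa c s N * (1 - c) ^ s ≤ 1 := by
    intro s N
    rcases lt_or_ge N s with h | h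
    · rw [aa_gt _ h]; simp
    · have e : (1 : ℝ) = ((1 - c) + c) ^ N := by simp
      refine le_trans ?_ (le_of_eq e.symm)
      rw [add_pow]
      have := Finset.single_le_sum (f := fun m => (1 - c) ^ m * c ^ (N - m) * (N.choose m : ℝ))
        (s := Finset.range (N + 1)) (fun i _ => by positivity) (Finset.mem_range.2 (by omega : s < N + 1))
      refine le_trans (le_of_eq ?_) this
      simp only [aa]; ring
  have nn : ∀ s N : ℕ, 0 ≤ aa c s N := fun s N => by unfold aa; positivity
  calc |ff c c (-(1 - c ^ 2)) k (k + n)|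
      ≤ ∑ s ∈ Finset.range (k + 1), |(-(1 - c ^ 2)) ^ s * aa c s k * aa c s (k + n)| :=
        Finset.abs_sum_le_sum_abs _ _
    _ ≤ ∑ s ∈ Finset.range (k + 1), (1 + c) ^ s * c ^ (k - s) * (k.choose s : ℝ) := by
        apply Finset.sum_le_sum
        intro s _
        rw [abs_mul, abs_mul, abs_of_nonneg (nn s k), abs_of_nonneg (nn s (k + n)), abs_pow, abs_neg,
          abs_of_nonneg (by nlinarith : 0 ≤ 1 - c ^ 2)]
        have e : (1 - c ^ 2) ^ s = (1 + c) ^ s * (1 - c) ^ s := by rw [← mul_pow]; congr 1; ring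
        rw [e]
        calc (1 + c) ^ s * (1 - c) ^ s * aa c s k * aa c s (k + n)
            = (1 + c) ^ s * aa c s k * (aa c s (k + n) * (1 - c) ^ s) := by ring
          _ ≤ (1 + c) ^ s * aa c s k * 1 := by
              apply mul_le_mul_of_nonneg_left (key s (k + n))
              have := nn s k; positivity
          _ = _ := by unfold aa; ring
    _ = ((1 + c) + c) ^ k := by rw [add_pow]
    _ ≤ 3 ^ k := by gcongr; linarith

lemma iterD_left (N i : ℕ) (x : ℝ) : iteratedDeriv i (fun y : ℝ => (1 + y) ^ N) x =
    (N.descFactorial i : ℝ) * (1 + x) ^ (N - i) := by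
  have := congrFun (iteratedDeriv_comp_const_add (𝕜 := ℝ) (F := ℝ) i (fun y : ℝ => y ^ N) 1) x
  rw [this, iteratedDeriv_pow]

lemma iterD_right (N i : ℕ) (x : ℝ) : iteratedDeriv i (fun y : ℝ => (1 - y) ^ N) x =
    (-1) ^ i * ((N.descFactorial i : ℝ) * (1 - x) ^ (N - i)) := by
  have := congrFun (iteratedDeriv_comp_const_sub (𝕜 := ℝ) (F := ℝ) i (fun y : ℝ => y ^ N) 1) x
  rw [this, iteratedDeriv_pow]; simp

lemma jacobi_ff {r : ℝ} (hc : 0 < Real.cos r) (k n : ℕ) :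
    (Real.cos r) ^ n * jacobiP k n (Real.cos (2 * r)) =
      ff (Real.cos r) (Real.cos r) (-(1 - Real.cos r ^ 2)) k (k + n) := by
  set c := Real.cos r with hcdef
  have hx : Real.cos (2 * r) = 2 * c ^ 2 - 1 := Real.cos_two_mul r
  rw [hx]
  unfold jacobiP
  have hfun : (fun y : ℝ => (1 + y) ^ n * (1 - y ^ 2) ^ k) =
      (fun y : ℝ => (1 + y) ^ (k + n)) * (fun y : ℝ => (1 - y) ^ k) := by
    ext y
    simp only [Pi.mul_apply]
    have : (1 - y ^ 2) = (1 + y) * (1 - y) := by ring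
    rw [this, mul_pow, pow_add]; ring
  rw [hfun, iteratedDeriv_mul (by fun_prop) (by fun_prop), Finset.mul_sum, Finset.mul_sum]
  unfold ff
  apply Finset.sum_congr rfl
  intro s hs
  simp only [Finset.mem_range] at hs
  obtain ⟨q, rfl⟩ : ∃ q, k = s + q := ⟨k - s, by omega⟩
  rw [iterD_left, iterD_right]
  unfold aa
  have e1 : s + q - s = q := by omega
  have e2 : s + q + n - s = q + n := by omega
  have e3 : s + q - q = s := by omega
  rw [e1, e2, e3]
  have d1 : ((s + q + n).descFactorial s : ℝ) = (s.factorial : ℝ) * ((s + q + n).choose s : ℝ) := by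
    exact_mod_cast Nat.descFactorial_eq_factorial_mul_choose _ _
  have d2 : (s.factorial : ℝ) * ((s + q).descFactorial q : ℝ) = ((s + q).factorial : ℝ) := by
    have := Nat.factorial_mul_descFactorial (n := s + q) (k := q) (by omega)
    rw [e3] at this
    exact_mod_cast this
  rw [d1, ← d2]
  have f1 : (s.factorial : ℝ) ≠ 0 := by positivity
  have f2 : ((s + q).descFactorial q : ℝ) ≠ 0 := by
    intro h; rw [h, mul_zero] at d2
    exact absurd d2.symm (by positivity)
  have g1 : 1 + (2 * c ^ 2 - 1) = 2 * c ^ 2 := by ring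
  have g2 : 1 - (2 * c ^ 2 - 1) = 2 * (1 - c ^ 2) := by ring
  rw [g1, g2]
  have s1 : ((-1 : ℝ)) ^ q * (-1) ^ q = 1 := by rw [← mul_pow]; simp
  rw [neg_pow (1 - c ^ 2) s]
  simp only [mul_pow, pow_add]
  field_simp
  have hsq : ((-1 : ℝ) ^ q) ^ 2 = 1 := by rw [sq, s1]
  simp only [hsq]
  try ring


lemma norm_cexp_le (z : ℂ) : ‖Complex.exp z‖ ≤ rexp |z.re| := by
  rw [Complex.norm_exp]; exact Real.exp_le_exp.2 (le_abs_self _)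

lemma norm_ccosh_le (z : ℂ) : ‖Complex.cosh z‖ ≤ rexp |z.re| := by
  rw [Complex.cosh]
  have h1 := norm_cexp_le z
  have h2 := norm_cexp_le (-z)
  rw [Complex.neg_re, abs_neg] at h2
  rw [norm_div]
  have := norm_add_le (Complex.exp z) (Complex.exp (-z))
  simp only [Complex.norm_ofNat]
  linarith

lemma norm_csinh_le (z : ℂ) : ‖Complex.sinh z‖ ≤ ‖z‖ * rexp |z.re| := by
  have hd : ∀ s : ℝ, HasDerivAt (fun s : ℝ => Complex.sinh (s * z)) (Complex.cosh (s * z) * z) s := by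
    intro s
    have h1 : HasDerivAt (fun s : ℝ => (s : ℂ) * z) z s := by
      simpa using (Complex.ofRealCLM.hasDerivAt (x := s)).mul_const z
    exact (Complex.hasDerivAt_sinh _).comp s h1
  have := norm_image_sub_le_of_norm_deriv_le_segment_01' (f := fun s : ℝ => Complex.sinh (s * z))
    (C := ‖z‖ * rexp |z.re|) (fun s _ => (hd s).hasDerivWithinAt) (by
      intro s hs
      rw [norm_mul, mul_comm]
      gcongr
      refine (norm_ccosh_le _).trans (Real.exp_le_exp.2 ?_)
      simp only [Complex.re_ofReal_mul, abs_mul]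
      rw [abs_of_nonneg hs.1]
      nlinarith [abs_nonneg z.re, hs.2])
  simpa using this

noncomputable def qq (t : ℝ) : ℝ := rexp (-(π ^ 2 / (4 * t)))
noncomputable def EE (t : ℝ) : ℝ := 16 * qq t / (1 - qq t)

lemma qq_lt {t : ℝ} (ht : 0 < t) : qq t < 1 := by
  unfold qq
  rw [Real.exp_lt_one_iff]
  have := Real.pi_pos
  have : 0 < π ^ 2 / (4 * t) := by positivity
  linarith

lemma qq_pos (t : ℝ) : 0 < qq t := Real.exp_pos _

lemma EE_nonneg {t : ℝ} (ht : 0 < t) : 0 ≤ EE t := by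
  unfold EE
  have := qq_lt ht
  have := qq_pos t
  apply div_nonneg <;> linarith

lemma EE_tendsto : Filter.Tendsto EE (nhdsWithin 0 (Set.Ioi 0)) (nhds 0) := by
  have h1 : Filter.Tendsto qq (nhdsWithin 0 (Set.Ioi 0)) (nhds 0) := by
    unfold qq
    refine Real.tendsto_exp_atBot.comp ?_
    refine Filter.tendsto_neg_atTop_atBot.comp ?_
    have : (fun t : ℝ => π ^ 2 / (4 * t)) = fun t => (π ^ 2 / 4) * t⁻¹ := by
      ext t; rw [← div_div, div_eq_mul_inv _ t]
    rw [this]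
    exact Filter.Tendsto.const_mul_atTop (by positivity) tendsto_inv_nhdsGT_zero
  have : Filter.Tendsto (fun t => 16 * qq t / (1 - qq t)) (nhdsWithin 0 (Set.Ioi 0))
      (nhds (16 * 0 / (1 - 0))) :=
    (h1.const_mul 16).div (tendsto_const_nhds.sub h1) (by norm_num)
  simpa [EE] using! this

lemma term_bound {t : ℝ} (ht : 0 < t) {δ : ℂ} (hre : |δ.re| ≤ π / 2) (n : ℕ) :
    ‖(δ - 2 * π * n) * Complex.exp (π * n * δ / t - π ^ 2 * n ^ 2 / t) +
      (δ + 2 * π * n) * Complex.exp (-(π * n * δ / t) - π ^ 2 * n ^ 2 / t)‖ ≤ ‖δ‖ * (16 * qq t ^ n) := by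
  have hpi := Real.pi_pos
  have e : (δ - 2 * π * n) * Complex.exp (π * n * δ / t - π ^ 2 * n ^ 2 / t) +
      (δ + 2 * π * n) * Complex.exp (-(π * n * δ / t) - π ^ 2 * n ^ 2 / t) =
      ((rexp (-(π ^ 2 * n ^ 2 / t)) : ℝ) : ℂ) * (2 * δ * Complex.cosh (π * n * δ / t) -
        4 * π * n * Complex.sinh (π * n * δ / t)) := by
    rw [sub_eq_add_neg _ ((π : ℂ) ^ 2 * n ^ 2 / t), sub_eq_add_neg _ ((π : ℂ) ^ 2 * n ^ 2 / t),
      Complex.exp_add, Complex.exp_add, Complex.cosh, Complex.sinh]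
    push_cast
    ring
  rw [e, norm_mul, Complex.norm_real, Real.norm_of_nonneg (Real.exp_pos _).le]
  set z : ℂ := π * n * δ / t with hz
  have hz' : z = ((π * n / t : ℝ) : ℂ) * δ := by rw [hz]; push_cast; ring
  have hzr : |z.re| ≤ π ^ 2 * n / (2 * t) := by
    rw [hz', Complex.re_ofReal_mul, abs_mul, abs_of_nonneg (by positivity)]
    calc π * n / t * |δ.re| ≤ π * n / t * (π / 2) := by gcongr
      _ = _ := by field_simp
  have hzn : ‖z‖ = π * n / t * ‖δ‖ := by
    rw [hz', norm_mul, Complex.norm_real, Real.norm_of_nonneg (by positivity)]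
  have h1 : ‖2 * δ * Complex.cosh z - 4 * π * n * Complex.sinh z‖ ≤
      ‖δ‖ * (2 + 4 * π ^ 2 * n ^ 2 / t) * rexp (π ^ 2 * n / (2 * t)) := by
    refine (norm_sub_le _ _).trans ?_
    have a1 : ‖2 * δ * Complex.cosh z‖ ≤ 2 * ‖δ‖ * rexp (π ^ 2 * n / (2 * t)) := by
      rw [norm_mul, norm_mul, Complex.norm_ofNat]
      gcongr
      exact (norm_ccosh_le z).trans (Real.exp_le_exp.2 hzr)
    have a2 : ‖4 * π * n * Complex.sinh z‖ ≤ 4 * π * n * (π * n / t * ‖δ‖ * rexp (π ^ 2 * n / (2 * t))) := by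
      rw [norm_mul, norm_mul, norm_mul, Complex.norm_ofNat, Complex.norm_natCast, Complex.norm_real,
        Real.norm_of_nonneg hpi.le]
      gcongr
      refine (norm_csinh_le z).trans ?_
      rw [hzn]
      gcongr
    refine (add_le_add a1 a2).trans (le_of_eq ?_)
    field_simp
  refine (mul_le_mul_of_nonneg_left h1 (Real.exp_pos _).le).trans ?_
  set v : ℝ := π ^ 2 * n ^ 2 / (2 * t) with hv
  have hv0 : 0 ≤ v := by positivity
  have hnn : (n : ℝ) ≤ n ^ 2 := by exact_mod_cast Nat.le_self_pow (by norm_num) n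
  have b1 : π ^ 2 * n / (2 * t) ≤ v := by rw [hv]; gcongr
  have b2 : 4 * π ^ 2 * n ^ 2 / t = 8 * v := by rw [hv]; field_simp; ring
  have b3 : π ^ 2 * n ^ 2 / t = 2 * v := by rw [hv]; field_simp
  rw [b2, b3]
  have b4 : 1 + v / 2 ≤ rexp (v / 2) := by linarith [Real.add_one_le_exp (v / 2)]
  have b5 : rexp (-(v / 2)) ≤ qq t ^ n := by
    unfold qq
    rw [← Real.exp_nat_mul]
    apply Real.exp_le_exp.2
    have : (n : ℝ) * -(π ^ 2 / (4 * t)) = -((π ^ 2 * n / (2 * t)) / 2) := by field_simp; norm_num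
    rw [this]; linarith
  calc rexp (-(2 * v)) * (‖δ‖ * (2 + 8 * v) * rexp (π ^ 2 * n / (2 * t)))
      ≤ rexp (-(2 * v)) * (‖δ‖ * (16 * rexp (v / 2)) * rexp v) := by
        gcongr
        linarith
    _ = ‖δ‖ * (16 * rexp (-(v / 2))) := by
        have : rexp (-(v / 2)) = rexp (-(2 * v)) * rexp (v / 2) * rexp v := by
          rw [← Real.exp_add, ← Real.exp_add]; congr 1; ring
        rw [this]; ring
    _ ≤ _ := by gcongr

lemma theta_S {t : ℝ} (ht : 0 < t) {δ : ℂ} (hre : |δ.re| ≤ π / 2) :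
    ∃ R : ℂ, ‖R‖ ≤ ‖δ‖ * EE t ∧
      HasSum (fun m : ℕ => ((((m : ℝ) + 1) * rexp (-((m : ℝ) + 1) ^ 2 * t) : ℝ) : ℂ) *
        Complex.sin ((m + 1) * δ))
        (((√(π / t) / (4 * t) : ℝ) : ℂ) * Complex.exp (-δ ^ 2 / (4 * t)) * (δ + R)) := by
  have hpi := Real.pi_pos
  have hpc : (π : ℂ) ≠ 0 := by exact_mod_cast hpi.ne'
  have htc : (t : ℂ) ≠ 0 := by exact_mod_cast ht.ne'
  have hI := Complex.I_ne_zero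
  set τ : ℂ := Complex.I * t / π with hτ
  set z : ℂ := δ / (2 * π) with hz
  have hτ' : τ = ((t / π : ℝ) : ℂ) * Complex.I := by rw [hτ]; push_cast; ring
  have hτim : 0 < τ.im := by
    rw [hτ', Complex.im_ofReal_mul]; simp; positivity
  have hτ2 : -1 / τ = ((π / t : ℝ) : ℂ) * Complex.I := by
    rw [hτ]; push_cast; field_simp; simp
  have himTau : 0 < (-1 / τ).im := by
    rw [hτ2, Complex.im_ofReal_mul]; simp; positivity
  have hzτ : z / τ = - Complex.I * δ / (2 * t) := by
    rw [hτ, hz]; field_simp; simp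
  have H1 := hasSum_jacobiTheta₂'_term z hτim
  have H2 := hasSum_jacobiTheta₂'_term (z / τ) himTau
  have H3 := hasSum_jacobiTheta₂_term (z / τ) himTau
  have FE := jacobiTheta₂'_functional_equation z τ
  have H4 := H2.sub (H3.mul_left (2 * π * Complex.I * z))
  set B := jacobiTheta₂' (z / τ) (-1 / τ) - 2 * π * Complex.I * z * jacobiTheta₂ (z / τ) (-1 / τ) with hB
  have H1' := H1.nat_add_neg
  rw [← hasSum_nat_add_iff' 1] at H1'
  have H4' := H4.nat_add_neg
  rw [← hasSum_nat_add_iff' 1] at H4'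
  refine ⟨Complex.I * B - δ, ?_, ?_⟩
  · have H5 := H4'.mul_left Complex.I
    have hval : Complex.I * (B + (jacobiTheta₂'_term 0 (z / τ) (-1 / τ) - 2 * π * Complex.I * z *
        jacobiTheta₂_term 0 (z / τ) (-1 / τ)) - ∑ i ∈ Finset.range 1,
        (jacobiTheta₂'_term (i : ℤ) (z / τ) (-1 / τ) - 2 * π * Complex.I * z *
        jacobiTheta₂_term (i : ℤ) (z / τ) (-1 / τ) + (jacobiTheta₂'_term (-(i : ℤ)) (z / τ) (-1 / τ) - 2 * π * Complex.I * z *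
        jacobiTheta₂_term (-(i : ℤ)) (z / τ) (-1 / τ)))) = Complex.I * B - δ := by
      simp [jacobiTheta₂'_term, jacobiTheta₂_term, hz]
      field_simp
      ring_nf
      simp
      try ring
    rw [hval] at H5
    have hg : HasSum (fun n : ℕ => ‖δ‖ * (16 * qq t ^ (n + 1))) (‖δ‖ * EE t) := by
      have := ((hasSum_geometric_of_lt_one (qq_pos t).le (qq_lt ht)).mul_left (16 * qq t)).mul_left ‖δ‖
      have hfun : (fun n : ℕ => ‖δ‖ * (16 * qq t ^ (n + 1))) = fun i => ‖δ‖ * (16 * qq t * qq t ^ i) := by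
        ext n; ring
      have hv : ‖δ‖ * EE t = ‖δ‖ * (16 * qq t * (1 - qq t)⁻¹) := by unfold EE; ring
      rw [hfun, hv]; exact this
    rw [← H5.tsum_eq]
    refine tsum_of_norm_bounded hg ?_
    intro n
    refine le_trans (le_of_eq ?_) (term_bound ht hre (n + 1))
    congr 1
    simp only [jacobiTheta₂'_term, jacobiTheta₂_term, hτ2, hzτ]
    have e1 : (2 * π * Complex.I * ((n + 1 : ℕ) : ℤ) * (-Complex.I * δ / (2 * t)) + π * Complex.I * (((n + 1 : ℕ) : ℤ) : ℂ) ^ 2 *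
        (((π / t : ℝ) : ℂ) * Complex.I)) = π * (n + 1 : ℕ) * δ / t - π ^ 2 * ((n + 1 : ℕ) : ℂ) ^ 2 / t := by
      push_cast
      field_simp
      ring_nf
      simp
      try ring
    have e2 : (2 * π * Complex.I * (-((n + 1 : ℕ) : ℤ) : ℤ) * (-Complex.I * δ / (2 * t)) + π * Complex.I * ((-((n + 1 : ℕ) : ℤ) : ℤ) : ℂ) ^ 2 *
        (((π / t : ℝ) : ℂ) * Complex.I)) = -(π * (n + 1 : ℕ) * δ / t) - π ^ 2 * ((n + 1 : ℕ) : ℂ) ^ 2 / t := by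
      push_cast
      field_simp
      ring_nf
      simp
      try ring
    rw [e1, e2, hz]
    push_cast
    have e3 : 2 * (π : ℂ) * Complex.I * (δ / (2 * π)) = Complex.I * δ := by field_simp
    rw [e3]
    linear_combination (-(2 * π * (n + 1) * (Complex.exp (π * (n + 1) * δ / t - π ^ 2 * (n + 1) ^ 2 / t)) -
       δ * Complex.exp (π * (n + 1) * δ / t - π ^ 2 * (n + 1) ^ 2 / t)) * (-1) + 
       (-2 * π * (n + 1) - δ) * Complex.exp (-(π * (n + 1) * δ / t) - π ^ 2 * (n + 1) ^ 2 / t)) * Complex.I_sq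
  · have H6 := H1'.mul_left (-1 / (4 * π) : ℂ)
    have hfun : (fun m : ℕ => ((((m : ℝ) + 1) * rexp (-((m : ℝ) + 1) ^ 2 * t) : ℝ) : ℂ) *
        Complex.sin ((m + 1) * δ)) = fun i : ℕ => -1 / (4 * π : ℂ) * (jacobiTheta₂'_term ((i + 1 : ℕ) : ℤ) z τ +
          jacobiTheta₂'_term (-((i + 1 : ℕ) : ℤ)) z τ) := by
      ext m
      simp only [jacobiTheta₂'_term, jacobiTheta₂_term]
      have e1 : (2 * π * Complex.I * ((m + 1 : ℕ) : ℤ) * z + π * Complex.I * (((m + 1 : ℕ) : ℤ) : ℂ) ^ 2 * τ) =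
          ((-((m : ℝ) + 1) ^ 2 * t : ℝ) : ℂ) + (m + 1) * δ * Complex.I := by
        rw [hz, hτ]; push_cast; field_simp; ring_nf; simp; try ring
      have e2 : (2 * π * Complex.I * (-((m + 1 : ℕ) : ℤ) : ℤ) * z + π * Complex.I * ((-((m + 1 : ℕ) : ℤ) : ℤ) : ℂ) ^ 2 * τ) =
          ((-((m : ℝ) + 1) ^ 2 * t : ℝ) : ℂ) + -((m + 1) * δ) * Complex.I := by
        rw [hz, hτ]; push_cast; field_simp; ring_nf; simp; try ring
      rw [e1, e2, Complex.exp_add, Complex.exp_add, Complex.sin, Complex.ofReal_mul, Complex.ofReal_exp]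
      push_cast
      field_simp
      ring
    have hv : ((√(π / t) / (4 * t) : ℝ) : ℂ) * Complex.exp (-δ ^ 2 / (4 * t)) * (δ + (Complex.I * B - δ)) =
        -1 / (4 * π : ℂ) * (jacobiTheta₂' z τ + jacobiTheta₂'_term 0 z τ - ∑ i ∈ Finset.range 1,
          (jacobiTheta₂'_term (i : ℤ) z τ + jacobiTheta₂'_term (-(i : ℤ)) z τ)) := by
      have hval : jacobiTheta₂' z τ + jacobiTheta₂'_term 0 z τ - ∑ i ∈ Finset.range 1,
          (jacobiTheta₂'_term (i : ℤ) z τ + jacobiTheta₂'_term (-(i : ℤ)) z τ) = jacobiTheta₂' z τ := by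
        simp [jacobiTheta₂'_term]
      rw [hval, FE]
      have e1 : -Complex.I * τ = ((t / π : ℝ) : ℂ) := by
        rw [hτ]; push_cast; field_simp; simp
      have e2 : ((t / π : ℝ) : ℂ) ^ (1 / 2 : ℂ) = ((√(t / π) : ℝ) : ℂ) := by
        rw [Real.sqrt_eq_rpow, Complex.ofReal_cpow (by positivity)]; norm_num
      have e3 : -π * Complex.I * z ^ 2 / τ = -δ ^ 2 / (4 * t) := by
        rw [hz, hτ]; field_simp; norm_num
      have e4 : √(π / t) = 1 / √(t / π) := by
        rw [one_div, ← Real.sqrt_inv, inv_div]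
      rw [e1, e2, e3, e4, hτ]
      push_cast
      field_simp
      ring_nf
      simp
      try ring
    rw [hfun, hv]; exact H6


lemma sinh_le_mul_cosh {x : ℝ} (hx : 0 ≤ x) : Real.sinh x ≤ x * Real.cosh x := by
  have hd : ∀ y : ℝ, HasDerivAt (fun y => y * Real.cosh y - Real.sinh y) (y * Real.sinh y) y := by
    intro y
    have := ((hasDerivAt_id y).mul (Real.hasDerivAt_cosh y)).sub (Real.hasDerivAt_sinh y)
    convert! this using 1
    simp
  have hm : MonotoneOn (fun y => y * Real.cosh y - Real.sinh y) (Set.Ici 0) := by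
    apply monotoneOn_of_deriv_nonneg (convex_Ici 0)
    · exact fun y _ => (hd y).continuousAt.continuousWithinAt
    · exact fun y _ => (hd y).differentiableAt.differentiableWithinAt
    · intro y hy
      simp at hy
      rw [(hd y).deriv]
      exact mul_nonneg hy.le (Real.sinh_nonneg_iff.2 hy.le)
  have := hm (Set.mem_Ici.2 le_rfl) (Set.mem_Ici.2 hx) hx
  simp at this
  linarith

lemma logcosh_mono {x y : ℝ} (hx : 0 ≤ x) (hxy : x ≤ y) :
    2 * (Real.log (Real.cosh y) - Real.log (Real.cosh x)) ≤ y ^ 2 - x ^ 2 := by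
  have hd : ∀ y : ℝ, HasDerivAt (fun y => y ^ 2 / 2 - Real.log (Real.cosh y))
      (y - Real.sinh y / Real.cosh y) y := by
    intro y
    have := ((hasDerivAt_pow 2 y).div_const 2).sub ((Real.hasDerivAt_cosh y).log (Real.cosh_pos y).ne')
    convert! this using 1
    simp
  have hm : MonotoneOn (fun y => y ^ 2 / 2 - Real.log (Real.cosh y)) (Set.Ici 0) := by
    apply monotoneOn_of_deriv_nonneg (convex_Ici 0)
    · exact fun y _ => (hd y).continuousAt.continuousWithinAt
    · exact fun y _ => (hd y).differentiableAt.differentiableWithinAt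
    · intro y hy
      simp at hy
      rw [(hd y).deriv, sub_nonneg, div_le_iff₀ (Real.cosh_pos y)]
      exact sinh_le_mul_cosh hy.le
  have := hm (Set.mem_Ici.2 hx) (Set.mem_Ici.2 (hx.trans hxy)) hxy
  simp only at this
  linarith

noncomputable def WW (v : ℝ) : ℝ := -Real.log (Real.cos v) - v ^ 2 / 2

lemma WW_zero : WW 0 = 0 := by simp [WW]

lemma WW_deriv {v : ℝ} (h : Real.cos v ≠ 0) : HasDerivAt WW (Real.tan v - v) v := by
  have := ((Real.hasDerivAt_cos v).log h).neg.sub ((hasDerivAt_pow 2 v).div_const 2)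
  unfold WW
  convert! this using 1
  rw [Real.tan_eq_sin_div_cos]
  simp [neg_div]

lemma WW_pos {r : ℝ} (h0 : 0 < r) (h1 : r < π / 2) : 0 < WW r := by
  have hc : ∀ x ∈ Set.Icc 0 r, Real.cos x ≠ 0 := fun x hx =>
    (Real.cos_pos_of_mem_Ioo ⟨by linarith [hx.1], by linarith [hx.2]⟩).ne'
  have hm : StrictMonoOn WW (Set.Icc 0 r) := by
    apply strictMonoOn_of_deriv_pos (convex_Icc 0 r)
    · exact fun y hy => (WW_deriv (hc y hy)).continuousAt.continuousWithinAt
    · intro y hy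
      rw [interior_Icc] at hy
      rw [(WW_deriv (hc y ⟨hy.1.le, hy.2.le⟩)).deriv, sub_pos]
      exact Real.lt_tan hy.1 (by linarith [hy.2])
  have := hm (Set.left_mem_Icc.2 h0.le) (Set.right_mem_Icc.2 h0.le) h0
  rwa [WW_zero] at this

lemma WW_convex {r : ℝ} (h0 : 0 < r) (h1 : r < π / 2) : ConvexOn ℝ (Set.Icc 0 r) WW := by
  have hc : ∀ x ∈ Set.Icc 0 r, Real.cos x ≠ 0 := fun x hx =>
    (Real.cos_pos_of_mem_Ioo ⟨by linarith [hx.1], by linarith [hx.2]⟩).ne'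
  have hc' : ∀ x ∈ interior (Set.Icc 0 r), Real.cos x ≠ 0 := fun x hx => hc x (interior_subset hx)
  apply convexOn_of_hasDerivWithinAt2_nonneg (convex_Icc 0 r)
    (f' := fun v => Real.tan v - v) (f'' := fun v => 1 / Real.cos v ^ 2 - 1)
  · exact fun y hy => (WW_deriv (hc y hy)).continuousAt.continuousWithinAt
  · exact fun y hy => (WW_deriv (hc' y hy)).hasDerivWithinAt
  · exact fun y hy => ((Real.hasDerivAt_tan (hc' y hy)).sub (hasDerivAt_id y)).hasDerivWithinAt
  · intro y hy
    have := hc' y hy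
    rw [sub_nonneg, le_div_iff₀ (by positivity)]
    nlinarith [Real.cos_sq_le_one y]

lemma WW_le {r δ : ℝ} (h0 : 0 < r) (h1 : r < π / 2) (hδ : 0 ≤ δ) (hδr : δ ≤ r) :
    (r - δ) * (WW r / r) ≤ WW r - WW δ := by
  have hδr' : δ / r ≤ 1 := (div_le_one h0).2 hδr
  have := (WW_convex h0 h1).2 (Set.left_mem_Icc.2 h0.le) (Set.right_mem_Icc.2 h0.le)
    (sub_nonneg.2 hδr') (div_nonneg hδ h0.le) (by ring)
  simp only [smul_eq_mul, mul_zero, zero_add, WW_zero] at this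
  rw [div_mul_cancel₀ _ h0.ne'] at this
  have e : (r - δ) * (WW r / r) = WW r - δ / r * WW r := by field_simp
  linarith

lemma cosh_quad (y : ℝ) : 1 + y ^ 2 / 2 ≤ Real.cosh y := by
  have h : Real.cosh y = 1 + 2 * Real.sinh (y / 2) ^ 2 := by
    have := Real.cosh_two_mul (y / 2)
    rw [show 2 * (y / 2) = y by ring] at this
    have h2 := Real.cosh_sq (y / 2)
    linarith
  rw [h]
  have h2 : (y / 2) ^ 2 ≤ Real.sinh (y / 2) ^ 2 := by
    rw [← sq_abs (y / 2), ← sq_abs (Real.sinh (y / 2)), Real.abs_sinh]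
    exact pow_le_pow_left₀ (abs_nonneg _) (Real.self_le_sinh_iff.2 (abs_nonneg _)) 2
  linarith

lemma delta_real {r : ℝ} (h0 : 0 < r) (h1 : r < π / 2) {y : ℝ} (hy : Real.cos r * Real.cosh y < 1) :
    let δ := Real.arccos (Real.cos r * Real.cosh y)
    Real.cos δ = Real.cos r * Real.cosh y ∧ 0 < δ ∧ δ ≤ r ∧
      Real.cos r * (WW r / r) * y ^ 2 ≤ y ^ 2 + δ ^ 2 - r ^ 2 := by
  intro δ
  have hc : 0 < Real.cos r := Real.cos_pos_of_mem_Ioo ⟨by linarith, h1⟩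
  have hx0 : 0 < Real.cos r * Real.cosh y := mul_pos hc (Real.cosh_pos y)
  have hcos : Real.cos δ = Real.cos r * Real.cosh y := Real.cos_arccos (by linarith) hy.le
  have hδ0 : 0 < δ := Real.arccos_pos.2 hy
  have hδr : δ ≤ r := by
    have : Real.arccos (Real.cos r * Real.cosh y) ≤ Real.arccos (Real.cos r) := by
      apply Real.arccos_le_arccos
      nlinarith [Real.one_le_cosh y]
    rwa [Real.arccos_cos h0.le (by linarith)] at this
  refine ⟨hcos, hδ0, hδr, ?_⟩
  have hlog : Real.log (Real.cosh y) = Real.log (Real.cos δ) - Real.log (Real.cos r) := by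
    rw [hcos, Real.log_mul hc.ne' (Real.cosh_pos y).ne']; ring
  have hle : Real.log (Real.cosh y) ≤ y ^ 2 / 2 := by
    rw [Real.log_le_iff_le_exp (Real.cosh_pos y)]
    exact Real.cosh_le_exp_half_sq y
  have hW := WW_le h0 h1 hδ0.le hδr
  have hd : Real.cos r * (y ^ 2 / 2) ≤ r - δ := by
    have a1 := Real.abs_cos_sub_cos_le δ r
    rw [abs_sub_comm δ r, abs_of_nonneg (by linarith : 0 ≤ r - δ)] at a1
    have a2 := (le_abs_self _).trans a1
    rw [hcos] at a2
    have := cosh_quad y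
    nlinarith
  have hWp := div_pos (WW_pos h0 h1) h0
  have h3 : Real.cos r * (y ^ 2 / 2) * (WW r / r) ≤ (r - δ) * (WW r / r) := by gcongr
  have h4 : WW r - WW δ = Real.log (Real.cosh y) + δ ^ 2 / 2 - r ^ 2 / 2 := by
    rw [hlog]; unfold WW; ring
  linarith

lemma delta_imag {r : ℝ} (h0 : 0 < r) (h1 : r < π / 2) {y : ℝ} (hy : 1 < Real.cos r * Real.cosh y) :
    let η := Real.arcosh (Real.cos r * Real.cosh y)
    let a := -Real.log (Real.cos r)
    Real.cosh η = Real.cos r * Real.cosh y ∧ 0 < η ∧ 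
      2 * WW r ≤ y ^ 2 - η ^ 2 - r ^ 2 ∧ 2 * a * |y| - a ^ 2 - r ^ 2 ≤ y ^ 2 - η ^ 2 - r ^ 2 := by
  intro η a
  have hc : 0 < Real.cos r := Real.cos_pos_of_mem_Ioo ⟨by linarith, h1⟩
  have hcosh : Real.cosh η = Real.cos r * Real.cosh y := Real.cosh_arcosh hy.le
  have hη : 0 < η := Real.arcosh_pos hy
  refine ⟨hcosh, hη, ?_, ?_⟩
  · have hle : η ≤ |y| := by
      have : Real.cosh η ≤ Real.cosh y := by
        rw [hcosh]; nlinarith [Real.cosh_pos y, Real.cos_le_one r]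
      rw [Real.cosh_le_cosh, abs_of_pos hη] at this
      exact this
    have := logcosh_mono hη.le hle
    rw [Real.cosh_abs, sq_abs, hcosh, Real.log_mul hc.ne' (Real.cosh_pos y).ne'] at this
    unfold WW
    linarith
  · have : Real.cosh η ≤ Real.cosh (|y| - a) := by
      rw [hcosh, Real.cosh_sub, ← Real.cosh_abs y]
      have e : Real.cos r = Real.cosh a - Real.sinh a := by
        rw [Real.cosh_sub_sinh]; simp only [a, neg_neg]; rw [Real.exp_log hc]
      rw [e]
      have ha : 0 ≤ a := by
        have := Real.log_nonpos hc.le (Real.cos_le_one r)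
        simp only [a]; linarith
      have hs : 0 ≤ Real.sinh a := Real.sinh_nonneg_iff.2 ha
      have := Real.sinh_lt_cosh |y|
      nlinarith
    rw [Real.cosh_le_cosh] at this
    have := sq_le_sq.2 this
    have e2 := sq_abs y
    nlinarith

lemma delta_exists {r : ℝ} (h0 : 0 < r) (h1 : r < π / 2) : ∃ κ > 0, ∀ y : ℝ,
    Real.cos r * Real.cosh y ≠ 1 → ∃ (δ : ℂ) (φ : ℝ),
      Complex.cos δ = ((Real.cos r * Real.cosh y : ℝ) : ℂ) ∧ Complex.sin δ ≠ 0 ∧ |δ.re| ≤ π / 2 ∧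
      ‖δ‖ ≤ π / 2 * ‖Complex.sin δ‖ ∧ (φ : ℂ) = y ^ 2 + δ ^ 2 - r ^ 2 ∧
      (κ * y ^ 2 ≤ φ ∨ κ * |y| ≤ φ) := by
  have hpi := Real.pi_pos
  have hc : 0 < Real.cos r := Real.cos_pos_of_mem_Ioo ⟨by linarith, h1⟩
  have hW := WW_pos h0 h1
  set a := -Real.log (Real.cos r) with ha
  have hapos : 0 < a := by
    unfold WW at hW
    nlinarith [sq_nonneg r]
  set κ1 := Real.cos r * (WW r / r) with hκ1
  have hkpa : 0 < κ1 := by positivity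
  set Y := (a ^ 2 + r ^ 2) / a with hY
  have hYp : 0 < Y := by positivity
  set κ2 := min a (2 * WW r / Y) with hκ2
  have hkpb : 0 < κ2 := lt_min hapos (by positivity)
  refine ⟨min κ1 κ2, lt_min hkpa hkpb, fun y hy => ?_⟩
  rcases lt_or_gt_of_ne hy with hlt | hgt
  · obtain ⟨b1, b2, b3, b4⟩ := delta_real h0 h1 hlt
    set δ := Real.arccos (Real.cos r * Real.cosh y) with hδ
    have hs : 0 < Real.sin δ := Real.sin_pos_of_pos_of_lt_pi b2 (by linarith)
    refine ⟨(δ : ℂ), y ^ 2 + δ ^ 2 - r ^ 2, ?_, ?_, ?_, ?_, ?_, Or.inl ?_⟩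
    · rw [← Complex.ofReal_cos, b1]
    · rw [← Complex.ofReal_sin]; exact_mod_cast hs.ne'
    · rw [Complex.ofReal_re, abs_of_pos b2]; linarith
    · rw [← Complex.ofReal_sin, Complex.norm_real, Complex.norm_real, Real.norm_of_nonneg b2.le,
        Real.norm_of_nonneg hs.le]
      have := Real.mul_le_sin b2.le (by linarith)
      calc δ = π / 2 * (2 / π * δ) := by field_simp
        _ ≤ _ := by gcongr
    · push_cast; ring
    · refine le_trans ?_ b4
      gcongr
      exact min_le_left _ _
  · obtain ⟨b1, b2, b3, b4⟩ := delta_imag h0 h1 hgt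
    set η := Real.arcosh (Real.cos r * Real.cosh y) with hη
    rw [← ha] at b4
    have hs : 0 < Real.sinh η := Real.sinh_pos_iff.2 b2
    refine ⟨(η : ℂ) * Complex.I, y ^ 2 - η ^ 2 - r ^ 2, ?_, ?_, ?_, ?_, ?_, Or.inr ?_⟩
    · rw [Complex.cos_mul_I, ← Complex.ofReal_cosh, b1]
    · rw [Complex.sin_mul_I, ← Complex.ofReal_sinh]
      exact mul_ne_zero (by exact_mod_cast hs.ne') Complex.I_ne_zero
    · simp; positivity
    · rw [Complex.sin_mul_I, ← Complex.ofReal_sinh, norm_mul, norm_mul, Complex.norm_I, mul_one, mul_one,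
        Complex.norm_real, Complex.norm_real, Real.norm_of_nonneg b2.le, Real.norm_of_nonneg hs.le]
      have := Real.self_le_sinh_iff.2 b2.le
      have := Real.pi_gt_three
      nlinarith
    · push_cast; rw [mul_pow, Complex.I_sq]; ring
    · have hmin : min κ1 κ2 * |y| ≤ κ2 * |y| := by gcongr; exact min_le_right _ _
      refine hmin.trans ?_
      rcases le_or_gt |y| Y with hle | hgt'
      · refine le_trans ?_ b3
        calc κ2 * |y| ≤ (2 * WW r / Y) * Y := by
              gcongr; exact min_le_right _ _
          _ = 2 * WW r := by field_simp
      · refine le_trans ?_ b4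
        have h5 : κ2 * |y| ≤ a * |y| := by gcongr; exact min_le_left _ _
        have h6 : a * Y = a ^ 2 + r ^ 2 := by rw [hY]; field_simp
        nlinarith


lemma gauss_summ {a : ℝ} (ha : 0 < a) (b : ℝ) :
    Summable (fun n : ℤ => ((n.natAbs : ℝ) + 1) * rexp (-a * (n.natAbs : ℝ) ^ 2 + b * (n.natAbs : ℝ))) := by
  have hpi := Real.pi_pos
  have h0 := summable_pow_mul_jacobiTheta₂_term_bound (b / (2 * π)) (T := a / π) (by positivity) 0
  have h1 := summable_pow_mul_jacobiTheta₂_term_bound (b / (2 * π)) (T := a / π) (by positivity) 1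
  refine (h1.add h0).congr ?_
  intro n
  have e : -π * (a / π * (n : ℝ) ^ 2 - 2 * (b / (2 * π)) * ((|n| : ℤ) : ℝ)) =
      -a * (n.natAbs : ℝ) ^ 2 + b * (n.natAbs : ℝ) := by
    have : (n : ℝ) ^ 2 = (n.natAbs : ℝ) ^ 2 := by
      rw [Nat.cast_natAbs, Int.cast_abs, sq_abs]
    rw [this, Nat.cast_natAbs]; field_simp; ring
  rw [e, Nat.cast_natAbs]; ring

lemma gauss_summ_nat {a : ℝ} (ha : 0 < a) (b : ℝ) :
    Summable (fun n : ℕ => ((n : ℝ) + 1) * rexp (-a * (n : ℝ) ^ 2 + b * (n : ℝ))) := by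
  have := (gauss_summ ha b).comp_injective Nat.cast_injective
  refine this.congr ?_
  intro n; simp

lemma exp_summ {a : ℝ} (ha : 0 < a) :
    Summable (fun n : ℤ => ((n.natAbs : ℝ) + 1) * rexp (-a * (n.natAbs : ℝ))) := by
  have h : Summable (fun n : ℕ => ((n : ℝ) + 1) * rexp (-a * (n : ℝ))) := by
    have h0 := Real.summable_pow_mul_exp_neg_nat_mul 0 ha
    have h1 := Real.summable_pow_mul_exp_neg_nat_mul 1 ha
    refine (h1.add h0).congr ?_
    intro n; ring
  apply Summable.of_nat_of_neg
  · simpa using h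
  · simpa using h

noncomputable def JJ (r : ℝ) (n : ℤ) (k : ℕ) : ℝ :=
  ff (Real.cos r) (Real.cos r) (-(1 - Real.cos r ^ 2)) k (k + n.natAbs)

noncomputable def coef (t r : ℝ) (p : ℤ × ℕ) : ℝ :=
  (2 * (p.2 : ℝ) + (p.1.natAbs : ℝ) + 1) *
    rexp (-((2 * (p.2 : ℝ) + (p.1.natAbs : ℝ) + 1) ^ 2 - 1) * t) * JJ r p.1 p.2

lemma JJ_bound {r : ℝ} (h0 : 0 < r) (h1 : r < π / 2) (n : ℤ) (k : ℕ) : |JJ r n k| ≤ rexp (Real.log 3 * k) := by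
  have hc : 0 < Real.cos r := Real.cos_pos_of_mem_Ioo ⟨by linarith, h1⟩
  have hc1 : Real.cos r < 1 := by
    have := Real.cos_lt_cos_of_nonneg_of_le_pi_div_two le_rfl h1.le h0
    simpa using this
  have := ff_bound hc hc1 k n.natAbs
  rw [mul_comm, Real.exp_nat_mul, Real.exp_log (by norm_num)]
  exact this

lemma coef_bound {r : ℝ} (h0 : 0 < r) (h1 : r < π / 2) {t : ℝ} (ht : 0 < t) (p : ℤ × ℕ) :
    |coef t r p| ≤ (2 * (((p.2 : ℝ) + 1) * rexp (-(4 * t) * (p.2 : ℝ) ^ 2 + Real.log 3 * p.2))) *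
      (((p.1.natAbs : ℝ) + 1) * rexp (-(2 * t) * p.1.natAbs) * rexp (- t * (p.1.natAbs : ℝ) ^ 2)) := by
  obtain ⟨n, k⟩ := p
  unfold coef
  simp only
  set N : ℝ := (n.natAbs : ℝ)
  set K : ℝ := (k : ℝ)
  have hN : 0 ≤ N := Nat.cast_nonneg _
  have hK : 0 ≤ K := Nat.cast_nonneg _
  rw [abs_mul, abs_mul, abs_of_nonneg (by positivity : 0 ≤ 2 * K + N + 1), abs_of_pos (Real.exp_pos _)]
  have e1 : (2 * K + N + 1) ≤ 2 * (K + 1) * (N + 1) := by nlinarith [mul_nonneg hK hN]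
  have e2 : rexp (-((2 * K + N + 1) ^ 2 - 1) * t) ≤ rexp (-(4 * t) * K ^ 2) * rexp (-(2 * t) * N) * rexp (-t * N ^ 2) := by
    rw [← Real.exp_add, ← Real.exp_add]
    apply Real.exp_le_exp.2
    have : 0 ≤ t * (4 * K * N + 4 * K) := by positivity
    nlinarith
  have e3 := JJ_bound h0 h1 n k
  calc (2 * K + N + 1) * rexp (-((2 * K + N + 1) ^ 2 - 1) * t) * |JJ r n k|
      ≤ (2 * (K + 1) * (N + 1)) * (rexp (-(4 * t) * K ^ 2) * rexp (-(2 * t) * N) * rexp (-t * N ^ 2)) *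
        rexp (Real.log 3 * k) := by gcongr
    _ = _ := by rw [Real.exp_add]; ring

lemma summ1 {r : ℝ} (h0 : 0 < r) (h1 : r < π / 2) {t : ℝ} (ht : 0 < t) :
    Summable (fun p : ℤ × ℕ => |coef t r p| * rexp ((p.1 : ℝ) ^ 2 * t)) := by
  have hs := (exp_summ (a := 2 * t) (by positivity)).mul_of_nonneg
    ((gauss_summ_nat (a := 4 * t) (by positivity) (Real.log 3)).mul_left 2)
    (fun n => by positivity) (fun n => by positivity)
  refine Summable.of_nonneg_of_le (fun p => by positivity) (fun p => ?_) hs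
  have e : (p.1 : ℝ) ^ 2 = (p.1.natAbs : ℝ) ^ 2 := by rw [Nat.cast_natAbs, Int.cast_abs, sq_abs]
  rw [e]
  refine (mul_le_mul_of_nonneg_right (coef_bound h0 h1 ht p) (Real.exp_pos _).le).trans (le_of_eq ?_)
  have : rexp (-t * (p.1.natAbs : ℝ) ^ 2) * rexp ((p.1.natAbs : ℝ) ^ 2 * t) = 1 := by
    rw [← Real.exp_add, ← Real.exp_zero]; congr 1; ring
  linear_combination (2 * (((p.2 : ℝ) + 1) * rexp (-(4 * t) * (p.2 : ℝ) ^ 2 + Real.log 3 * p.2))) *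
      (((p.1.natAbs : ℝ) + 1) * rexp (-(2 * t) * p.1.natAbs)) * this

lemma summ2 {r : ℝ} (h0 : 0 < r) (h1 : r < π / 2) {t : ℝ} (ht : 0 < t) (y : ℝ) :
    Summable (fun p : ℤ × ℕ => coef t r p * rexp ((p.1 : ℝ) * y)) := by
  have hs := (gauss_summ (a := t) (by positivity) |y|).mul_of_nonneg
    ((gauss_summ_nat (a := 4 * t) (by positivity) (Real.log 3)).mul_left 2)
    (fun n => by positivity) (fun n => by positivity)
  refine Summable.of_norm_bounded hs (fun p => ?_)
  rw [Real.norm_eq_abs, abs_mul, abs_of_pos (Real.exp_pos _)]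
  have e : (p.1 : ℝ) * y ≤ |y| * p.1.natAbs := by
    rw [Nat.cast_natAbs, Int.cast_abs, mul_comm |y|, ← abs_mul]; exact le_abs_self _
  have e2 : rexp (-(2 * t) * p.1.natAbs) ≤ 1 := by
    rw [Real.exp_le_one_iff]
    have : 0 ≤ (2 * t) * (p.1.natAbs : ℝ) := by positivity
    linarith
  refine (mul_le_mul (coef_bound h0 h1 ht p) (Real.exp_le_exp.2 e) (Real.exp_pos _).le (by positivity)).trans ?_
  rw [Real.exp_add (-t * _)]
  calc _ = (((p.1.natAbs : ℝ) + 1) * (rexp (-t * (p.1.natAbs : ℝ) ^ 2) * rexp (|y| * (p.1.natAbs : ℝ)))) *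
        (2 * (((p.2 : ℝ) + 1) * rexp (-(4 * t) * (p.2 : ℝ) ^ 2 + Real.log 3 * p.2))) * 
        rexp (-(2 * t) * p.1.natAbs) := by ring
    _ ≤ _ := mul_le_of_le_one_right (by positivity) e2

def ee : ℤ × ℕ ≃ ℕ × ℕ where
  toFun p := (p.2 + p.1.toNat, p.2 + (-p.1).toNat)
  invFun p := ((p.1 : ℤ) - p.2, min p.1 p.2)
  left_inv := by
    rintro ⟨n, k⟩
    ext <;> simp <;> omega
  right_inv := by
    rintro ⟨i, j⟩
    ext <;> simp <;> omega

noncomputable def FF (t r y : ℝ) (p : ℕ × ℕ) : ℝ :=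
  ((p.1 : ℝ) + p.2 + 1) * rexp (-(((p.1 : ℝ) + p.2 + 1) ^ 2 - 1) * t) *
    ff (Real.cos r * rexp y) (Real.cos r * rexp (-y)) (-(1 - Real.cos r ^ 2)) p.1 p.2

lemma FF_ee (t r y : ℝ) (p : ℤ × ℕ) : FF t r y (ee p) = coef t r p * rexp ((p.1 : ℝ) * y) := by
  obtain ⟨n, k⟩ := p
  unfold FF coef JJ
  rw [ff_scale]
  simp only [ee, Equiv.coe_fn_mk]
  rcases le_total 0 n with hn | hn
  · have a1 : (-n).toNat = 0 := by omega
    have a2 : n.toNat = n.natAbs := by omega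
    have a3 : (n : ℝ) = (n.natAbs : ℝ) := by rw [Nat.cast_natAbs, abs_of_nonneg hn]
    rw [a1, a2, a3, ff_symm]
    push_cast
    rw [show (k : ℝ) + n.natAbs + (k + 0) + 1 = 2 * k + n.natAbs + 1 by ring,
      show ((k : ℝ) + n.natAbs - (k + 0)) * y = n.natAbs * y by ring]
    simp only [add_zero]
    ring
  · have a1 : n.toNat = 0 := by omega
    have a2 : (-n).toNat = n.natAbs := by omega
    have a3 : (n : ℝ) = -(n.natAbs : ℝ) := by rw [Nat.cast_natAbs, abs_of_nonpos hn]; simp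
    rw [a1, a2, a3]
    push_cast
    rw [show (k : ℝ) + 0 + (k + n.natAbs) + 1 = 2 * k + n.natAbs + 1 by ring,
      show ((k : ℝ) + 0 - (k + n.natAbs)) * y = -n.natAbs * y by ring]
    simp only [add_zero]
    ring

noncomputable def QT (t r y : ℝ) (m : ℕ) : ℝ :=
  ((m : ℝ) + 1) * rexp (-(((m : ℝ) + 1) ^ 2 - 1) * t) *
    TT (Real.cos r * rexp y) (Real.cos r * rexp (-y)) (-(1 - Real.cos r ^ 2)) m

noncomputable def QQ (t r y : ℝ) : ℝ := ∑' m : ℕ, QT t r y m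

lemma Q_hasSum {r : ℝ} (h0 : 0 < r) (h1 : r < π / 2) {t : ℝ} (ht : 0 < t) (y : ℝ) :
    HasSum (QT t r y) (QQ t r y) ∧
      HasSum (fun p : ℤ × ℕ => coef t r p * rexp ((p.1 : ℝ) * y)) (QQ t r y) := by
  obtain ⟨S, hS⟩ := summ2 h0 h1 ht y
  have hS1 : HasSum (FF t r y) S := by
    rw [← ee.hasSum_iff]
    convert hS using 2 with p
    exact FF_ee t r y p
  have hS2 : HasSum (QT t r y) S := by
    have h := (Finset.HasAntidiagonal.sigmaAntidiagonalEquivProd (A := ℕ)).hasSum_iff.2 hS1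
    have h2 := h.sigma (fun m => hasSum_fintype _)
    convert h2 using 2 with m
    unfold QT TT
    rw [Finset.mul_sum, ← Finset.sum_coe_sort]
    apply Finset.sum_congr rfl
    rintro ⟨⟨i, j⟩, hij⟩ _
    have : i + j = m := by simpa using hij
    subst this
    simp [FF]
  have : QQ t r y = S := hS2.tsum_eq
  rw [this]
  exact ⟨hS2, hS⟩

lemma QT_cont (t r : ℝ) (m : ℕ) : Continuous (fun y => QT t r y m) := by
  unfold QT TT ff aa
  fun_prop

lemma QQ_meas {r : ℝ} (h0 : 0 < r) (h1 : r < π / 2) {t : ℝ} (ht : 0 < t) : Measurable (QQ t r) := by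
  refine measurable_of_tendsto_metrizable (f := fun N y => ∑ m ∈ Finset.range N, QT t r y m) ?_ ?_
  · intro N
    exact (continuous_finsetSum _ fun m _ => QT_cont t r m).measurable
  · rw [tendsto_pi_nhds]
    intro y
    exact (Q_hasSum h0 h1 ht y).1.tendsto_sum_nat

lemma gauss_shift {t : ℝ} (ht : 0 < t) (b y : ℝ) : rexp (-y ^ 2 / (4 * t)) * rexp (b * y) =
    rexp (b ^ 2 * t) * rexp (-(1 / (4 * t)) * (y - 2 * b * t) ^ 2) := by
  rw [← Real.exp_add, ← Real.exp_add]; congr 1; field_simp; ring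

lemma gauss_int {t : ℝ} (ht : 0 < t) (b : ℝ) :
    MeasureTheory.Integrable (fun y : ℝ => rexp (-y ^ 2 / (4 * t)) * rexp (b * y)) ∧
    ∫ y : ℝ, rexp (-y ^ 2 / (4 * t)) * rexp (b * y) = √(4 * π * t) * rexp (b ^ 2 * t) := by
  simp_rw [gauss_shift ht b]
  constructor
  · apply MeasureTheory.Integrable.const_mul
    exact (integrable_exp_neg_mul_sq (b := 1 / (4 * t)) (by positivity)).comp_sub_right (2 * b * t)
  · rw [MeasureTheory.integral_const_mul,
      MeasureTheory.integral_sub_right_eq_self (fun y : ℝ => rexp (-(1 / (4 * t)) * y ^ 2)) (2 * b * t),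
      integral_gaussian, mul_comm]
    congr 2
    field_simp

lemma heat_int {r : ℝ} (h0 : 0 < r) (h1 : r < π / 2) {t : ℝ} (ht : 0 < t) :
    √(4 * π * t) * heatP t r 0 = ∫ y : ℝ, rexp (-y ^ 2 / (4 * t)) * QQ t r y := by
  have hc : 0 < Real.cos r := Real.cos_pos_of_mem_Ioo ⟨by linarith, h1⟩
  set h : ℤ × ℕ → ℝ := fun p => coef t r p * rexp ((p.1 : ℝ) ^ 2 * t) with hh
  have hsum : Summable h := by
    refine Summable.of_norm ((summ1 h0 h1 ht).congr fun p => ?_)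
    rw [hh, Real.norm_eq_abs, abs_mul, abs_of_pos (Real.exp_pos _)]
  have hterm : ∀ n k, heatTerm t r 0 n k = ((h (n, k) : ℝ) : ℂ) := by
    intro n k
    simp only [heatTerm, Complex.ofReal_zero, mul_zero, zero_mul, Complex.exp_zero, mul_one]
    congr 1
    rw [mul_assoc, jacobi_ff hc, hh]
    simp only [coef, JJ]
    have e : (n : ℝ) ^ 2 = (n.natAbs : ℝ) ^ 2 := by rw [Nat.cast_natAbs, Int.cast_abs, sq_abs]
    rw [e]
    have : rexp (-(4 * (k : ℝ) * (k + n.natAbs + 1) + 2 * n.natAbs) * t) =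
        rexp (-((2 * (k : ℝ) + n.natAbs + 1) ^ 2 - 1) * t) * rexp ((n.natAbs : ℝ) ^ 2 * t) := by
      rw [← Real.exp_add]; congr 1; ring
    rw [this]; ring
  have hP : heatP t r 0 = ∑' p, h p := by
    unfold heatP
    simp_rw [hterm, ← Complex.ofReal_tsum]
    rw [Complex.ofReal_re, hsum.tsum_prod]
  set F : ℤ × ℕ → ℝ → ℝ := fun p y => coef t r p * (rexp (-y ^ 2 / (4 * t)) * rexp ((p.1 : ℝ) * y)) with hF
  have hFi : ∀ p, MeasureTheory.Integrable (F p) := fun p => (gauss_int ht p.1).1.const_mul _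
  have hFn : ∀ p, ∫ y, ‖F p y‖ = √(4 * π * t) * (|coef t r p| * rexp ((p.1 : ℝ) ^ 2 * t)) := by
    intro p
    have : ∀ y, ‖F p y‖ = |coef t r p| * (rexp (-y ^ 2 / (4 * t)) * rexp ((p.1 : ℝ) * y)) := by
      intro y
      rw [hF, Real.norm_eq_abs, abs_mul, abs_of_pos (mul_pos (Real.exp_pos _) (Real.exp_pos _))]
    simp_rw [this]
    rw [MeasureTheory.integral_const_mul, (gauss_int ht p.1).2]; ring
  have hFs : Summable (fun p => ∫ y, ‖F p y‖) := by
    simp_rw [hFn]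
    exact (summ1 h0 h1 ht).mul_left _
  have key := MeasureTheory.hasSum_integral_of_summable_integral_norm hFi hFs
  have e1 : ∀ y, ∑' p, F p y = rexp (-y ^ 2 / (4 * t)) * QQ t r y := by
    intro y
    rw [← ((Q_hasSum h0 h1 ht y).2.mul_left (rexp (-y ^ 2 / (4 * t)))).tsum_eq]
    apply tsum_congr
    intro p
    simp only [hF]; ring
  have e2 : ∀ p, ∫ y, F p y = √(4 * π * t) * h p := by
    intro p
    simp only [hF, hh]
    rw [MeasureTheory.integral_const_mul, (gauss_int ht p.1).2]; ring
  simp_rw [e1, e2] at key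
  rw [← key.tsum_eq, tsum_mul_left, hP]


lemma Q_formula {r : ℝ} (h0 : 0 < r) (h1 : r < π / 2) {t : ℝ} (ht : 0 < t) (y : ℝ) {δ : ℂ}
    (hcos : Complex.cos δ = ((Real.cos r * Real.cosh y : ℝ) : ℂ)) (hre : |δ.re| ≤ π / 2) :
    ∃ R : ℂ, ‖R‖ ≤ ‖δ‖ * EE t ∧ (QQ t r y : ℂ) * Complex.sin δ =
      ((rexp t : ℝ) : ℂ) * (((√(π/t)/(4*t) : ℝ) : ℂ) * Complex.exp (-δ^2/(4*t)) * (δ + R)) := by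
  obtain ⟨R, hR, hs⟩ := theta_S ht hre
  refine ⟨R, hR, ?_⟩
  have e1 := (Complex.hasSum_ofReal.2 (Q_hasSum h0 h1 ht y).1).mul_right (Complex.sin δ)
  have e2 := hs.mul_left ((rexp t : ℝ) : ℂ)
  refine e1.unique ?_
  refine e2.congr_fun ?_
  intro m
  have hT := TT_sin (Real.cos r * rexp y) (Real.cos r * rexp (-y)) (-(1 - Real.cos r ^ 2)) δ
    (by rw [hcos, Real.cosh_eq]; push_cast; ring)
    (by
      have : rexp y * rexp (-y) = 1 := by rw [← Real.exp_add]; simp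
      linear_combination (Real.cos r)^2 * this) m
  have hexp : rexp (-(((m : ℝ) + 1) ^ 2 - 1) * t) = rexp t * rexp (-((m:ℝ)+1)^2 * t) := by
    rw [← Real.exp_add]; congr 1; ring
  unfold QT
  rw [Complex.ofReal_mul, mul_assoc, hT, hexp]
  push_cast
  ring

noncomputable def HH (t r y : ℝ) : ℝ :=
  (√(π/t)/(4*t))⁻¹ * rexp (r^2/(4*t)) * (rexp (-y^2/(4*t)) * QQ t r y)

lemma HH_formula {r : ℝ} (h0 : 0 < r) (h1 : r < π / 2) {t : ℝ} (ht : 0 < t) (y : ℝ) {δ : ℂ}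
    (hcos : Complex.cos δ = ((Real.cos r * Real.cosh y : ℝ) : ℂ)) (hre : |δ.re| ≤ π / 2)
    {φ : ℝ} (hφ : (φ : ℂ) = y ^ 2 + δ ^ 2 - r ^ 2) :
    ∃ R : ℂ, ‖R‖ ≤ ‖δ‖ * EE t ∧ (HH t r y : ℂ) * Complex.sin δ =
      ((rexp t * rexp (-φ / (4 * t)) : ℝ) : ℂ) * (δ + R) := by
  obtain ⟨R, hR, hs⟩ := Q_formula h0 h1 ht y hcos hre
  refine ⟨R, hR, ?_⟩
  have hA : √(π/t)/(4*t) ≠ 0 := by positivity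
  have hA' : ((√(π/t)/(4*t) : ℝ) : ℂ) ≠ 0 := by exact_mod_cast hA
  have hE : ((rexp (-φ / (4 * t)) : ℝ) : ℂ) =
      ((rexp (r^2/(4*t)) : ℝ) : ℂ) * ((rexp (-y^2/(4*t)) : ℝ) : ℂ) * Complex.exp (-δ^2/(4*t)) := by
    rw [Complex.ofReal_exp, Complex.ofReal_exp, Complex.ofReal_exp, ← Complex.exp_add,
      ← Complex.exp_add]
    congr 1
    push_cast
    rw [hφ]
    ring
  unfold HH
  rw [Complex.ofReal_mul, Complex.ofReal_mul, Complex.ofReal_mul, Complex.ofReal_inv,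
    Complex.ofReal_mul (rexp t), hE]
  calc _ = (((√(π/t)/(4*t) : ℝ) : ℂ))⁻¹ * ((rexp (r^2/(4*t)) : ℝ) : ℂ) * ((rexp (-y^2/(4*t)) : ℝ) : ℂ)
        * ((QQ t r y : ℂ) * Complex.sin δ) := by ring
    _ = _ := by
      rw [hs]
      generalize ((√(π/t)/(4*t) : ℝ) : ℂ) = A at hA'
      field_simp

lemma HH_bound {r : ℝ} (h0 : 0 < r) (h1 : r < π / 2) : ∃ κ > 0, ∀ t : ℝ, 0 < t → t ≤ 1 → EE t ≤ 1 →
    ∀ u : ℝ, Real.cos r * Real.cosh (√t * u) ≠ 1 →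
      ‖HH t r (√t * u)‖ ≤ rexp 1 * π * (rexp (-(κ/4) * u ^ 2) + rexp (-(κ/4) * |u|)) := by
  obtain ⟨κ, hκ, H⟩ := delta_exists h0 h1
  refine ⟨κ, hκ, fun t ht ht1 hE u hu => ?_⟩
  obtain ⟨δ, φ, a1, a2, a3, a4, a5, a6⟩ := H _ hu
  obtain ⟨R, hR, hs⟩ := HH_formula h0 h1 ht _ a1 a3 a5
  have hsp : 0 < ‖Complex.sin δ‖ := norm_pos_iff.2 a2
  have hn := congrArg norm hs
  rw [norm_mul, norm_mul, Complex.norm_real, Complex.norm_real, Real.norm_of_nonneg (by positivity : 0 ≤ rexp t * rexp (-φ / (4 * t)))] at hn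
  have hst : √t ^ 2 = t := Real.sq_sqrt ht.le
  have hst0 : 0 < √t := Real.sqrt_pos.2 ht
  have hst1 : √t ≤ 1 := Real.sqrt_le_one.2 ht1
  have hb : rexp (-φ / (4 * t)) ≤ rexp (-(κ/4) * u ^ 2) + rexp (-(κ/4) * |u|) := by
    rcases a6 with h | h
    · have : rexp (-φ / (4 * t)) ≤ rexp (-(κ/4) * u ^ 2) := by
        apply Real.exp_le_exp.2
        rw [div_le_iff₀ (by positivity)]
        rw [mul_pow, hst] at h
        nlinarith
      linarith [Real.exp_pos (-(κ/4) * |u|)]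
    · have : rexp (-φ / (4 * t)) ≤ rexp (-(κ/4) * |u|) := by
        apply Real.exp_le_exp.2
        rw [div_le_iff₀ (by positivity)]
        rw [abs_mul, abs_of_pos hst0] at h
        have : t ≤ √t := by nlinarith
        have h3 : κ * (t * |u|) ≤ κ * (√t * |u|) := by gcongr
        nlinarith
      linarith [Real.exp_pos (-(κ/4) * u^2)]
  have hδR : ‖δ + R‖ ≤ π * ‖Complex.sin δ‖ := by
    have h3 : ‖δ‖ * EE t ≤ ‖δ‖ * 1 := by gcongr
    have := norm_add_le δ R
    linarith
  have h5 : rexp t ≤ rexp 1 := Real.exp_le_exp.2 ht1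
  have h6 : ‖HH t r (√t * u)‖ * ‖Complex.sin δ‖ ≤
      (rexp 1 * π * (rexp (-(κ/4) * u ^ 2) + rexp (-(κ/4) * |u|))) * ‖Complex.sin δ‖ := by
    rw [hn]
    calc _ ≤ (rexp 1 * (rexp (-(κ/4) * u ^ 2) + rexp (-(κ/4) * |u|))) * (π * ‖Complex.sin δ‖) := by
          gcongr
      _ = _ := by ring
  exact le_of_mul_le_mul_right h6 hsp

lemma HH_real {r : ℝ} (h0 : 0 < r) (h1 : r < π / 2) {t : ℝ} (ht : 0 < t) {y δ : ℝ}
    (hy : Real.cos r * Real.cosh y < 1) (hδ : δ = Real.arccos (Real.cos r * Real.cosh y)) :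
    |HH t r y - rexp t * rexp (-(y^2 + δ^2 - r^2) / (4*t)) * (δ / Real.sin δ)| ≤
      rexp t * rexp (-(y^2 + δ^2 - r^2) / (4*t)) * (δ / Real.sin δ) * EE t := by
  obtain ⟨b1, b2, b3, -⟩ := delta_real h0 h1 hy
  rw [← hδ] at b1 b2 b3
  have hs : 0 < Real.sin δ := Real.sin_pos_of_pos_of_lt_pi b2 (by linarith [pi_pos])
  obtain ⟨R, hR, h⟩ := HH_formula h0 h1 ht y (δ := δ) (by rw [← b1]; simp)
    (by rw [Complex.ofReal_re, abs_of_pos b2]; linarith) (φ := y^2 + δ^2 - r^2) (by push_cast; ring)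
  set G := rexp t * rexp (-(y^2 + δ^2 - r^2) / (4*t)) with hG
  have hG0 : 0 < G := by positivity
  rw [← Complex.ofReal_sin] at h
  have h2 : ((HH t r y - G * (δ / Real.sin δ) : ℝ) : ℂ) = ((G / Real.sin δ : ℝ) : ℂ) * R := by
    have : ((Real.sin δ : ℝ) : ℂ) ≠ 0 := by exact_mod_cast hs.ne'
    push_cast at h this ⊢
    field_simp
    linear_combination h
  have h3 := congrArg norm h2
  rw [norm_mul, Complex.norm_real, Complex.norm_real, Real.norm_eq_abs,
    Real.norm_of_nonneg (by positivity : 0 ≤ G / Real.sin δ)] at h3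
  rw [h3]
  rw [Complex.norm_real, Real.norm_of_nonneg b2.le] at hR
  calc _ ≤ G / Real.sin δ * (δ * EE t) := by gcongr
    _ = _ := by ring


lemma X_deriv (r u : ℝ) : HasDerivWithinAt (fun t : ℝ => Real.cos r * Real.cosh (√t * u))
    (Real.cos r * (u ^ 2 / 2)) (Set.Ioi 0) 0 := by
  rw [hasDerivWithinAt_iff_tendsto_slope' (by simp)]
  have h1 : HasDerivAt (fun s : ℝ => Real.sinh (s * (u / 2))) (u / 2) 0 := by
    have := ((hasDerivAt_id (0:ℝ)).mul_const (u/2)).sinh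
    simpa using this
  rw [hasDerivAt_iff_tendsto_slope] at h1
  have h2 : Filter.Tendsto (fun t : ℝ => √t) (nhdsWithin 0 (Set.Ioi 0)) (nhdsWithin 0 {0}ᶜ) := by
    apply tendsto_nhdsWithin_of_tendsto_nhds_of_eventually_within
    · have := (Real.continuous_sqrt.tendsto 0).mono_left (nhdsWithin_le_nhds (s := Set.Ioi (0:ℝ)))
      simpa using this
    · filter_upwards [self_mem_nhdsWithin] with t ht
      have := Real.sqrt_pos.2 ht
      simpa using this.ne'
  have h3 := (((h1.comp h2).pow 2).const_mul (2 * Real.cos r))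
  have e : 2 * Real.cos r * (u / 2) ^ 2 = Real.cos r * (u ^ 2 / 2) := by ring
  rw [e] at h3
  refine h3.congr' ?_
  filter_upwards [self_mem_nhdsWithin] with t ht
  have ht' : 0 < t := ht
  have hst : √t ^ 2 = t := Real.sq_sqrt ht'.le
  have hst0 : 0 < √t := Real.sqrt_pos.2 ht'
  have hch : Real.cosh (√t * u) = 1 + 2 * Real.sinh (√t * (u/2)) ^ 2 := by
    have e : √t * u = 2 * (√t * (u/2)) := by ring
    rw [e, Real.cosh_two_mul, Real.cosh_sq]; ring
  simp only [Function.comp, slope_def_field, hch, Real.sqrt_zero, zero_mul, Real.sinh_zero, Real.cosh_zero, sub_zero]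
  rw [div_pow, hst]
  field_simp
  ring

lemma HH_limit {r : ℝ} (h0 : 0 < r) (h1 : r < π / 2) (u : ℝ) :
    Filter.Tendsto (fun t : ℝ => HH t r (√t * u)) (nhdsWithin 0 (Set.Ioi 0))
      (nhds ((r / Real.sin r) * rexp (-((1 - r * (Real.cos r / Real.sin r)) / 4) * u ^ 2))) := by
  have hc : 0 < Real.cos r := Real.cos_pos_of_mem_Ioo ⟨by linarith, h1⟩
  have hs : 0 < Real.sin r := Real.sin_pos_of_pos_of_lt_pi h0 (by linarith [pi_pos])
  have hc1 : Real.cos r < 1 := by nlinarith [Real.sin_sq_add_cos_sq r]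
  have hX := X_deriv r u
  set X : ℝ → ℝ := fun t : ℝ => Real.cos r * Real.cosh (√t * u) with hXd
  have hX0 : X 0 = Real.cos r := by simp [hXd]
  have har : Real.arccos (Real.cos r) = r := Real.arccos_cos h0.le (by linarith)
  have hsq : √(1 - Real.cos r ^ 2) = Real.sin r := by
    rw [← Real.sin_sq, Real.sqrt_sq hs.le]
  have hA : HasDerivAt (fun x => Real.arccos x ^ 2) (-(2 * r / Real.sin r)) (X 0) := by
    have := (Real.hasDerivAt_arccos (x := X 0) (by rw [hX0]; linarith) (by rw [hX0]; linarith)).pow 2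
    rw [hX0, har, hsq] at this
    rw [hX0]
    convert! this using 1
    push_cast
    ring
  have hXc : Filter.Tendsto X (nhdsWithin 0 (Set.Ioi 0)) (nhds (Real.cos r)) := by
    have := hX.continuousWithinAt.tendsto
    rwa [hX0] at this
  have hδ : Filter.Tendsto (fun t => Real.arccos (X t)) (nhdsWithin 0 (Set.Ioi 0)) (nhds r) := by
    have := (Real.continuous_arccos.tendsto (Real.cos r)).comp hXc
    rwa [har] at this
  have hsl := hA.comp_hasDerivWithinAt (0:ℝ) hX
  rw [hasDerivWithinAt_iff_tendsto_slope' (by simp)] at hsl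
  have hphi : Filter.Tendsto (fun t => -((√t * u)^2 + Real.arccos (X t)^2 - r^2) / (4*t))
      (nhdsWithin 0 (Set.Ioi 0)) (nhds (-((1 - r * (Real.cos r / Real.sin r)) / 4) * u ^ 2)) := by
    have := (hsl.const_add (u^2)).const_mul (-1/4 : ℝ)
    have e : -1/4 * (u ^ 2 + -(2 * r / Real.sin r) * (Real.cos r * (u ^ 2 / 2))) =
      -((1 - r * (Real.cos r / Real.sin r)) / 4) * u ^ 2 := by
      field_simp; ring
    rw [e] at this
    refine this.congr' ?_
    filter_upwards [self_mem_nhdsWithin] with t ht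
    have ht' : 0 < t := ht
    have hst : √t ^ 2 = t := Real.sq_sqrt ht'.le
    simp only [slope_def_field, Function.comp, hX0, har, sub_zero]
    rw [mul_pow, hst]
    field_simp
    ring
  have hG : Filter.Tendsto (fun t => rexp t * rexp (-((√t * u)^2 + Real.arccos (X t)^2 - r^2) / (4*t))
      * (Real.arccos (X t) / Real.sin (Real.arccos (X t))))
      (nhdsWithin 0 (Set.Ioi 0))
      (nhds ((r / Real.sin r) * rexp (-((1 - r * (Real.cos r / Real.sin r)) / 4) * u ^ 2))) := by
    have e1 : Filter.Tendsto (fun t => rexp t) (nhdsWithin 0 (Set.Ioi 0)) (nhds 1) := by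
      have := (Real.continuous_exp.tendsto 0).mono_left (nhdsWithin_le_nhds (s := Set.Ioi (0:ℝ)))
      simpa using this
    have e2 := (Real.continuous_exp.tendsto _).comp hphi
    have e3 := hδ.div ((Real.continuous_sin.tendsto _).comp hδ) hs.ne'
    have e4 := (e1.mul e2).mul e3
    rw [one_mul, mul_comm (rexp _)] at e4
    exact e4
  have hlt : ∀ᶠ t in nhdsWithin 0 (Set.Ioi 0), X t < 1 := hXc.eventually (gt_mem_nhds hc1)
  have hd : Filter.Tendsto (fun t => HH t r (√t * u) - rexp t * rexp (-((√t * u)^2 + Real.arccos (X t)^2 - r^2) / (4*t))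
      * (Real.arccos (X t) / Real.sin (Real.arccos (X t))))
      (nhdsWithin 0 (Set.Ioi 0)) (nhds 0) := by
    have hz := hG.mul EE_tendsto
    rw [mul_zero] at hz
    refine squeeze_zero_norm' ?_ hz
    filter_upwards [self_mem_nhdsWithin, hlt] with t ht hl
    exact HH_real h0 h1 ht hl rfl
  have := hd.add hG
  rw [zero_add] at this
  refine this.congr fun t => ?_
  ring

lemma exp_abs_integrable {a : ℝ} (ha : 0 < a) :
    MeasureTheory.Integrable (fun u : ℝ => rexp (-a * |u|)) := by
  by_contra h
  have h1 := MeasureTheory.integral_undef h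
  rw [integral_comp_abs (f := fun x => rexp (-a * x)), integral_exp_mul_Ioi (by linarith)] at h1
  simp at h1
  exact ha.ne' h1

lemma ae_ne {r : ℝ} {t : ℝ} (ht : 0 < t) :
    ∀ᵐ u : ℝ, Real.cos r * Real.cosh (√t * u) ≠ 1 := by
  have hst0 : 0 < √t := Real.sqrt_pos.2 ht
  have hcount : {u : ℝ | Real.cos r * Real.cosh (√t * u) = 1}.Countable := by
    rcases Set.eq_empty_or_nonempty {u : ℝ | Real.cos r * Real.cosh (√t * u) = 1} with he | ⟨v, hv⟩
    · rw [he]; exact Set.countable_empty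
    · refine Set.Countable.mono (s₂ := {v, -v}) ?_ (Set.toFinite _).countable
      intro w hw
      simp only [Set.mem_ofPred_eq] at hv hw
      have hc : Real.cos r ≠ 0 := by rintro h; rw [h] at hv; simp at hv
      have hE : Real.cosh (√t * w) = Real.cosh (√t * v) := mul_left_cancel₀ hc (hw.trans hv.symm)
      have h1 : |√t * w| = |√t * v| :=
        le_antisymm (Real.cosh_le_cosh.1 hE.le) (Real.cosh_le_cosh.1 hE.ge)
      rw [abs_mul, abs_mul] at h1
      have h2 : |w| = |v| := mul_left_cancel₀ (abs_pos.2 hst0.ne').ne' h1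
      rcases abs_eq_abs.1 h2 with h | h <;> simp [h]
  have := hcount.measure_zero MeasureTheory.volume
  rw [MeasureTheory.ae_iff]
  simpa using this

lemma HH_int {r : ℝ} (h0 : 0 < r) (h1 : r < π / 2) {t : ℝ} (ht : 0 < t) :
    heatP t r 0 * (4 * t ^ ((3 : ℝ) / 2) / √π) * rexp (r ^ 2 / (4 * t)) =
      (√(4 * π))⁻¹ * ∫ u : ℝ, HH t r (√t * u) := by
  have hst : √t ^ 2 = t := Real.sq_sqrt ht.le
  have hst0 : 0 < √t := Real.sqrt_pos.2 ht
  have hp : 0 < √π := Real.sqrt_pos.2 pi_pos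
  rw [MeasureTheory.Measure.integral_comp_mul_left (fun y => HH t r y)]
  unfold HH
  rw [MeasureTheory.integral_const_mul, ← heat_int h0 h1 ht, abs_of_pos (by positivity), smul_eq_mul]
  have e1 : t ^ ((3:ℝ)/2) = t * √t := by
    rw [Real.sqrt_eq_rpow, ← Real.rpow_one_add' ht.le (by norm_num)]; norm_num
  have e2 : √(4 * π * t) = √(4*π) * √t := Real.sqrt_mul (by positivity) _
  have e4 : √(π/t) = √π / √t := Real.sqrt_div pi_pos.le _
  have e3 : 0 < √(4*π) := by positivity
  rw [e1, e2, e4]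
  field_simp

theorem main_limit {r : ℝ} (h0 : 0 < r) (h1 : r < π / 2) :
    Filter.Tendsto (fun t : ℝ => ∫ u : ℝ, HH t r (√t * u)) (nhdsWithin 0 (Set.Ioi 0))
      (nhds (∫ u : ℝ, (r / Real.sin r) * rexp (-((1 - r * (Real.cos r / Real.sin r)) / 4) * u ^ 2))) := by
  obtain ⟨κ, hκ, hB⟩ := HH_bound h0 h1
  refine MeasureTheory.tendsto_integral_filter_of_dominated_convergence
    (fun u => rexp 1 * π * (rexp (-(κ/4) * u ^ 2) + rexp (-(κ/4) * |u|))) ?_ ?_ ?_ ?_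
  · filter_upwards [self_mem_nhdsWithin] with t ht
    apply Measurable.aestronglyMeasurable
    have := QQ_meas h0 h1 ht
    unfold HH
    fun_prop
  · have hE : ∀ᶠ t in nhdsWithin 0 (Set.Ioi 0), EE t ≤ 1 :=
      (EE_tendsto.eventually (gt_mem_nhds one_pos)).mono fun _ h => le_of_lt h
    have ht1 : ∀ᶠ t : ℝ in nhdsWithin 0 (Set.Ioi 0), t < 1 :=
      nhdsWithin_le_nhds (gt_mem_nhds one_pos)
    filter_upwards [self_mem_nhdsWithin, hE, ht1] with t ht he h1'
    filter_upwards [ae_ne (r := r) ht] with u hu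
    exact hB t ht h1'.le he u hu
  · exact ((integrable_exp_neg_mul_sq (by positivity)).add (exp_abs_integrable (by positivity))).const_mul _
  · exact Filter.Eventually.of_forall fun u => HH_limit h0 h1 u

/-- Small-time asymptotics off the cut-locus at `z = 0`: for fixed `r ∈ (0, π/2)`,
`p_t(r,0) ~ (r/sin r) (1 - r cot r)^{-1/2} (√π/(4 t^{3/2})) e^{-r²/(4t)}` as `t → 0⁺`. -/
theorem stmt_12 (r : ℝ) (hr : r ∈ Set.Ioo 0 (Real.pi / 2)) :
    Filter.Tendsto
      (fun t : ℝ =>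
        heatP t r 0 * (4 * t ^ ((3 : ℝ) / 2) / Real.sqrt Real.pi) * Real.exp (r ^ 2 / (4 * t)))
      (nhdsWithin 0 (Set.Ioi 0))
      (nhds ((r / Real.sin r) *
        (1 - r * (Real.cos r / Real.sin r)) ^ (-(1 : ℝ) / 2))) := by

  obtain ⟨h0, h1⟩ := hr
  have hc : 0 < Real.cos r := Real.cos_pos_of_mem_Ioo ⟨by linarith, h1⟩
  have hs : 0 < Real.sin r := Real.sin_pos_of_pos_of_lt_pi h0 (by linarith [Real.pi_pos])
  have hb : 0 < 1 - r * (Real.cos r / Real.sin r) := by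
    have := Real.lt_tan h0 h1
    rw [Real.tan_eq_sin_div_cos, lt_div_iff₀ hc] at this
    rw [← mul_div_assoc, sub_pos, div_lt_one hs]
    exact this
  have h := (main_limit h0 h1).const_mul (√(4 * π))⁻¹
  rw [MeasureTheory.integral_const_mul, integral_gaussian] at h
  set b := 1 - r * (Real.cos r / Real.sin r) with hbd
  have e : (√(4 * π))⁻¹ * (r / Real.sin r * √(π / (b / 4))) = r / Real.sin r * b ^ (-(1:ℝ)/2) := by
    have e1 : π / (b/4) = 4 * π / b := by field_simp
    have e2 : b ^ (-(1:ℝ)/2) = (√b)⁻¹ := by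
      rw [Real.sqrt_eq_rpow, ← Real.rpow_neg hb.le]; norm_num
    have e3 : 0 < √(4*π) := by positivity
    rw [e1, e2, Real.sqrt_div (by positivity)]
    field_simp
  rw [e] at h
  refine h.congr' ?_
  filter_upwards [self_mem_nhdsWithin] with t ht
  exact (HH_int h0 h1 ht).symm
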